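/- Let z ≥ 0 and let δ* be any decision policy satisfying, for all t and all x, δ*_t(x₁,…,x_t) = 0 whenever z Λ_t(x) < 1 and δ*_t(x₁,…,x_t) = 1 whenever z Λ_t(x) > 1 (with arbitrary values in [0,1] where z Λ_t(x) = 1). Then for every stopping policy ψ, α(ψ,δ*) + z β(ψ,δ*) = ∑_{t=0}^∞ ∫_{X^t} min{1, z Λ_t(x)} φ_t(x) dP₀^{⊗t}(x) = J_z(ψ). -/

import Mathlib

/-!
Writing `P₁^{⊗t} = Λ_t · P₀^{⊗t}`, the `t`-th terms of `α` and `z β` combine into the single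
integral `∫ (δ_t + (1 - δ_t) z Λ_t) φ_t dP₀^{⊗t}`, and a likelihood-ratio rule makes the bracket
equal to `min {1, z Λ_t}` pointwise. The rest is convergence: splitting the series requires `α` and
`β` to be summable. Their terms are dominated by `∫ φ_t dP^{⊗t}`, which is summable for any
probability measure `P`: transported to the infinite product `P^{⊗ℕ}`, the partial sums of `φ_t`
telescope to `1 - ∏_{n<T} (1 - ψ_n) ≤ 1`.
-/

open MeasureTheory Filter
open scoped ENNReal

noncomputable section

/-- A stopping policy: a sequence of measurable stopping probabilities
`ψ_t : X^t → [0,1]`. -/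
structure StoppingPolicy (X : Type*) [MeasurableSpace X] where
  ψ : ∀ t : ℕ, (Fin t → X) → ℝ
  mem_Icc : ∀ t x, ψ t x ∈ Set.Icc (0 : ℝ) 1
  measurable' : ∀ t, Measurable (ψ t)

namespace StoppingPolicy

variable {X : Type*} [MeasurableSpace X]

/-- The stopping-time distribution `φ_t`, as a function of the first `t` observations. -/
def phiFin (p : StoppingPolicy X) (t : ℕ) (x : Fin t → X) : ℝ :=
  p.ψ t x * ∏ n : Fin t, (1 - p.ψ n.1 fun i => x ⟨i.1, lt_trans i.2 n.2⟩)

/-- The stopping-time distribution `φ_t`, as a function of the full observation sequence. -/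
def phi (p : StoppingPolicy X) (t : ℕ) (x : ℕ → X) : ℝ :=
  p.ψ t (fun i => x i.1) * ∏ n ∈ Finset.range t, (1 - p.ψ n fun i => x i.1)

/-- The conditional expected sample size `E_ψ[τ(x)] = ∑_t t φ_t(x)`,
as a `[0,∞]`-valued function of the observation sequence. -/
def esample (p : StoppingPolicy X) (x : ℕ → X) : ℝ≥0∞ :=
  ∑' t : ℕ, (t : ℝ≥0∞) * ENNReal.ofReal (p.phi t x)

end StoppingPolicy

/-- The feasible set `I_c^∞` of stopping policies whose conditional expected sample
size is at most `c` for every observation sequence. -/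
def feasible (X : Type*) [MeasurableSpace X] (c : ℝ) : Set (StoppingPolicy X) :=
  {p | ∀ x : ℕ → X, p.esample x ≤ ENNReal.ofReal c}

/-- The limited-randomness feasible set `I_{c,k}^∞`: members of `I_c^∞` such that along
every observation sequence, at every time reached with positive probability, at most `k`
of the stopping probabilities used so far lie in the open interval `(0,1)`. -/
def feasibleK (X : Type*) [MeasurableSpace X] (c : ℝ) (k : ℕ) : Set (StoppingPolicy X) :=
  {p | p ∈ feasible X c ∧ ∀ x : ℕ → X, ∀ t : ℕ,
    0 < ∏ n ∈ Finset.range t, (1 - p.ψ n fun i => x i.1) →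
    {n : ℕ | n ≤ t ∧ p.ψ n (fun i => x i.1) ∈ Set.Ioo (0 : ℝ) 1}.ncard ≤ k}

variable {X : Type*} [MeasurableSpace X]

/-- The likelihood ratio `Λ_t(x) = ∏_{n=1}^t L(x_n)`. -/
def lam (L : X → ℝ) (t : ℕ) (x : Fin t → X) : ℝ := ∏ i, L (x i)

/-- The cost `J_z(ψ) = ∑_t ∫ min{1, z Λ_t} φ_t dP₀^{⊗t}`. -/
def cost (P₀ : Measure X) (L : X → ℝ) (z : ℝ) (p : StoppingPolicy X) : ℝ :=
  ∑' t : ℕ, ∫ x : Fin t → X, min 1 (z * lam L t x) * p.phiFin t x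
    ∂(Measure.pi fun _ => P₀)

/-- The optimal cost `ρ(z, c) = inf_{ψ ∈ I_c^∞} J_z(ψ)`. -/
def rho (P₀ : Measure X) (L : X → ℝ) (z c : ℝ) : ℝ :=
  sInf (cost P₀ L z '' feasible X c)

/-- The optimal limited-randomness cost `ρ_k(z, c) = inf_{ψ ∈ I_{c,k}^∞} J_z(ψ)`. -/
def rhoK (P₀ : Measure X) (L : X → ℝ) (k : ℕ) (z c : ℝ) : ℝ :=
  sInf (cost P₀ L z '' feasibleK X c k)

/-- The function `r_k(z, b) = (1/b) (g(z) − ∫ ρ_k(z L(x), b − 1) dP₀(x))`. -/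
def rfun (P₀ : Measure X) (L : X → ℝ) (k : ℕ) (z b : ℝ) : ℝ :=
  (1 / b) * (min 1 z - ∫ x, rhoK P₀ L k (z * L x) (b - 1) ∂P₀)

end

/-- A decision policy: a sequence of measurable decision probabilities
`δ_t : X^t → [0,1]`. -/
structure DecisionPolicy (X : Type*) [MeasurableSpace X] where
  δ : ∀ t : ℕ, (Fin t → X) → ℝ
  mem_Icc : ∀ t x, δ t x ∈ Set.Icc (0 : ℝ) 1
  measurable' : ∀ t, Measurable (δ t)

/-- The Type I error probability `α(ψ, δ)`. -/
noncomputable def errAlpha {X : Type*} [MeasurableSpace X] (P₀ : Measure X)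
    (p : StoppingPolicy X) (d : DecisionPolicy X) : ℝ :=
  ∑' t : ℕ, ∫ x : Fin t → X, d.δ t x * p.phiFin t x ∂(Measure.pi fun _ => P₀)

/-- The Type II error probability `β(ψ, δ)`. -/
noncomputable def errBeta {X : Type*} [MeasurableSpace X] (P₁ : Measure X)
    (p : StoppingPolicy X) (d : DecisionPolicy X) : ℝ :=
  ∑' t : ℕ, ∫ x : Fin t → X, (1 - d.δ t x) * p.phiFin t x ∂(Measure.pi fun _ => P₁)

/-- The density of a power of `P.withDensity f` with respect to the power of `P`. On measurable
boxes the claim is the product formula for the independent variables `1_{s i}(x i) f(x i)`. -/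
lemma pi_withDensity_eq {X : Type*} [MeasurableSpace X] (P : Measure X) [IsProbabilityMeasure P]
    (f : X → ℝ≥0∞) (hf : Measurable f) [IsProbabilityMeasure (P.withDensity f)] (t : ℕ) :
    Measure.pi (fun _ : Fin t => P.withDensity f)
      = (Measure.pi fun _ : Fin t => P).withDensity fun x => ∏ i, f (x i) := by
  refine Measure.pi_eq fun s hs => ?_
  have hbox : MeasurableSet (Set.univ.pi s) := MeasurableSet.univ_pi hs
  rw [withDensity_apply _ hbox, ← lintegral_indicator hbox]
  have hind : ∀ x : Fin t → X, (Set.univ.pi s).indicator (fun x => ∏ i, f (x i)) x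
      = ∏ i, (s i).indicator f (x i) := by
    intro x
    by_cases hx : x ∈ Set.univ.pi s
    · rw [Set.indicator_of_mem hx]
      exact Finset.prod_congr rfl fun i _ => (Set.indicator_of_mem (hx i trivial) f).symm
    · rw [Set.indicator_of_notMem hx]
      obtain ⟨i, hi⟩ : ∃ i, x i ∉ s i := by simpa [Set.mem_univ_pi] using hx
      exact (Finset.prod_eq_zero (Finset.mem_univ i) (Set.indicator_of_notMem hi f)).symm
  simp_rw [hind]
  have hmeas : ∀ i, Measurable ((s i).indicator f) := fun i => hf.indicator (hs i)
  rw [ProbabilityTheory.lintegral_prod_eq_prod_lintegral_of_indepFun Finset.univ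
    (fun i (x : Fin t → X) => (s i).indicator f (x i))
    (ProbabilityTheory.iIndepFun_pi fun i => (hmeas i).aemeasurable)
    fun i => (hmeas i).comp (measurable_pi_apply i)]
  refine Finset.prod_congr rfl fun i _ => ?_
  rw [withDensity_apply _ (hs i), ← lintegral_indicator (hs i)]
  exact (measurePreserving_eval (fun _ : Fin t => P) i).lintegral_comp (hmeas i)

namespace StoppingPolicy

variable {X : Type*} [MeasurableSpace X] (p : StoppingPolicy X)

lemma phiFin_nonneg (t : ℕ) (x : Fin t → X) : 0 ≤ p.phiFin t x :=
  mul_nonneg (p.mem_Icc _ _).1 (Finset.prod_nonneg fun _ _ => sub_nonneg.2 (p.mem_Icc _ _).2)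

lemma phiFin_le_one (t : ℕ) (x : Fin t → X) : p.phiFin t x ≤ 1 :=
  mul_le_one₀ (p.mem_Icc _ _).2
    (Finset.prod_nonneg fun _ _ => sub_nonneg.2 (p.mem_Icc _ _).2)
    (Finset.prod_le_one (fun _ _ => sub_nonneg.2 (p.mem_Icc _ _).2)
      fun _ _ => sub_le_self _ (p.mem_Icc _ _).1)

lemma measurable_phiFin (t : ℕ) : Measurable (p.phiFin t) := by
  refine (p.measurable' t).mul (Finset.measurable_prod _ fun n _ => ?_)
  exact measurable_const.sub
    ((p.measurable' n.1).comp (measurable_pi_lambda _ fun i => measurable_pi_apply _))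

lemma phiFin_restrict (t : ℕ) (x : ℕ → X) : p.phiFin t (fun i => x i.1) = p.phi t x := by
  simp only [phiFin, phi]
  rw [← Fin.prod_univ_eq_prod_range (fun n => 1 - p.ψ n fun i => x i.1)]

/-- The mass stopped before time `T` telescopes against the mass still running at time `T`. -/
lemma sum_phi_add_prod (T : ℕ) (x : ℕ → X) :
    ∑ t ∈ Finset.range T, p.phi t x
      + ∏ n ∈ Finset.range T, (1 - p.ψ n fun i => x i.1) = 1 := by
  induction T with
  | zero => simp
  | succ T ih =>
    rw [Finset.sum_range_succ, Finset.prod_range_succ, phi]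
    linear_combination ih

lemma sum_phi_le_one (T : ℕ) (x : ℕ → X) : ∑ t ∈ Finset.range T, p.phi t x ≤ 1 := by
  rw [← p.sum_phi_add_prod T x]
  exact le_add_of_nonneg_right
    (Finset.prod_nonneg fun _ _ => sub_nonneg.2 (p.mem_Icc _ _).2)

lemma integrable_mul_phiFin (P : Measure X) [IsProbabilityMeasure P] {t : ℕ}
    {w : (Fin t → X) → ℝ} (hw : Measurable w) (hw01 : ∀ x, w x ∈ Set.Icc (0 : ℝ) 1) :
    Integrable (fun x => w x * p.phiFin t x) (Measure.pi fun _ => P) := by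
  refine Integrable.of_bound (hw.mul (p.measurable_phiFin t)).aestronglyMeasurable 1
    (ae_of_all _ fun x => ?_)
  rw [Real.norm_of_nonneg (mul_nonneg (hw01 x).1 (p.phiFin_nonneg t x))]
  exact mul_le_one₀ (hw01 x).2 (p.phiFin_nonneg t x) (p.phiFin_le_one t x)

lemma integrable_phiFin (P : Measure X) [IsProbabilityMeasure P] (t : ℕ) :
    Integrable (p.phiFin t) (Measure.pi fun _ => P) := by
  simpa using p.integrable_mul_phiFin P (t := t) (w := fun _ => 1) measurable_const (by simp)

/-- The first `t` coordinates of an i.i.d. sequence with law `P` have law `P^{⊗t}`. -/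
lemma measurePreserving_take (P : Measure X) [IsProbabilityMeasure P] (t : ℕ) :
    MeasurePreserving (fun (x : ℕ → X) (i : Fin t) => x i.1)
      (Measure.infinitePi fun _ : ℕ => P) (Measure.pi fun _ : Fin t => P) :=
  ⟨by fun_prop, by
    rw [Measure.map_infinitePi_infinitePi_of_inj (P := fun _ : ℕ => P)
      (f := fun i : Fin t => i.1) Fin.val_injective, Measure.infinitePi_eq_pi]⟩

lemma summable_integral_phiFin (P : Measure X) [IsProbabilityMeasure P] :
    Summable fun t : ℕ => ∫ x, p.phiFin t x ∂(Measure.pi fun _ : Fin t => P) := by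
  refine summable_of_sum_range_le (c := 1)
    (fun t => integral_nonneg (p.phiFin_nonneg t)) fun T => ?_
  -- All terms become integrals over the common space `X^ℕ`, where the sum can be taken inside.
  have hint : ∀ t, Integrable (p.phi t) (Measure.infinitePi fun _ : ℕ => P) := fun t => by
    simpa only [Function.comp_def, phiFin_restrict] using
      (measurePreserving_take P t).integrable_comp_of_integrable (p.integrable_phiFin P t)
  have heq : ∀ t, ∫ x, p.phiFin t x ∂(Measure.pi fun _ : Fin t => P)
      = ∫ x, p.phi t x ∂(Measure.infinitePi fun _ : ℕ => P) := fun t => by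
    have h := measurePreserving_take P t
    rw [← h.map_eq, integral_map h.measurable.aemeasurable
      (p.measurable_phiFin t).aestronglyMeasurable]
    simp only [phiFin_restrict]
  simp_rw [heq]
  rw [← integral_finsetSum _ fun t _ => hint t]
  calc _ ≤ ∫ _, (1 : ℝ) ∂(Measure.infinitePi fun _ : ℕ => P) :=
        integral_mono (integrable_finsetSum _ fun t _ => hint t) (integrable_const _)
          (p.sum_phi_le_one T)
    _ = 1 := by simp

lemma summable_integral_mul_phiFin (P : Measure X) [IsProbabilityMeasure P]
    {w : ∀ t : ℕ, (Fin t → X) → ℝ} (hw : ∀ t, Measurable (w t))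
    (hw01 : ∀ t x, w t x ∈ Set.Icc (0 : ℝ) 1) :
    Summable fun t : ℕ => ∫ x, w t x * p.phiFin t x ∂(Measure.pi fun _ : Fin t => P) :=
  (p.summable_integral_phiFin P).of_nonneg_of_le
    (fun t => integral_nonneg fun x => mul_nonneg (hw01 t x).1 (p.phiFin_nonneg t x))
    fun t => integral_mono (p.integrable_mul_phiFin P (hw t) (hw01 t)) (p.integrable_phiFin P t)
      fun x => mul_le_of_le_one_left (p.phiFin_nonneg t x) (hw01 t x).2

end StoppingPolicy

/-- **Theorem 2, optimality of the likelihood-ratio decision rule.**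
If `δ*` satisfies `δ*_t(x) = 0` whenever `z Λ_t(x) < 1` and `δ*_t(x) = 1` whenever
`z Λ_t(x) > 1`, then for every stopping policy `ψ`,
`α(ψ,δ*) + z β(ψ,δ*) = J_z(ψ)`. -/
theorem errSum_eq_cost_of_likelihoodRatioRule
    {X : Type*} [MeasurableSpace X] (P₀ P₁ : Measure X)
    [IsProbabilityMeasure P₀] [IsProbabilityMeasure P₁]
    (L : X → ℝ) (hLmeas : Measurable L) (hLnn : ∀ x, 0 ≤ L x)
    (hP₁ : P₁ = P₀.withDensity fun x => ENNReal.ofReal (L x))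
    (z : ℝ) (hz : 0 ≤ z) (d : DecisionPolicy X)
    (hd0 : ∀ (t : ℕ) (x : Fin t → X), z * lam L t x < 1 → d.δ t x = 0)
    (hd1 : ∀ (t : ℕ) (x : Fin t → X), 1 < z * lam L t x → d.δ t x = 1)
    (p : StoppingPolicy X) :
    errAlpha P₀ p d + z * errBeta P₁ p d = cost P₀ L z p := by
  have hL' : Measurable fun x => ENNReal.ofReal (L x) := hLmeas.ennreal_ofReal
  have hw : ∀ t, Measurable fun x => 1 - d.δ t x := fun t =>
    measurable_const.sub (d.measurable' t)
  have hw01 : ∀ t x, 1 - d.δ t x ∈ Set.Icc (0 : ℝ) 1 := fun t x =>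
    ⟨sub_nonneg.2 (d.mem_Icc t x).2, sub_le_self _ (d.mem_Icc t x).1⟩
  have hα := p.summable_integral_mul_phiFin P₀ d.measurable' d.mem_Icc
  have hβ := p.summable_integral_mul_phiFin P₁ hw hw01
  rw [errAlpha, errBeta, cost, ← tsum_mul_left, ← hα.tsum_add (hβ.mul_left z)]
  refine tsum_congr fun t => ?_
  have hI₀ := p.integrable_mul_phiFin P₀ (d.measurable' t) (d.mem_Icc t)
  have hI₁ := p.integrable_mul_phiFin P₁ (hw t) (hw01 t)
  subst hP₁
  have hdens : Measurable fun x : Fin t → X => ∏ i, ENNReal.ofReal (L (x i)) :=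
    Finset.measurable_prod _ fun i _ => hL'.comp (measurable_pi_apply i)
  have hfin : ∀ᵐ x ∂(Measure.pi fun _ : Fin t => P₀), ∏ i, ENNReal.ofReal (L (x i)) < ∞ :=
    ae_of_all _ fun x => ENNReal.prod_lt_top fun i _ => ENNReal.ofReal_lt_top
  have hreal : ∀ x : Fin t → X, (∏ i, ENNReal.ofReal (L (x i))).toReal = lam L t x := fun x => by
    simp only [lam, ENNReal.toReal_prod, ENNReal.toReal_ofReal (hLnn _)]
  rw [pi_withDensity_eq P₀ _ hL' t] at hI₁ ⊢
  rw [integrable_withDensity_iff_integrable_smul' hdens hfin] at hI₁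
  rw [integral_withDensity_eq_integral_toReal_smul hdens hfin]
  simp only [hreal, smul_eq_mul] at hI₁ ⊢
  rw [← integral_const_mul, ← integral_add hI₀ (hI₁.const_mul z)]
  refine integral_congr_ae (ae_of_all _ fun x => ?_)
  dsimp only
  rcases lt_trichotomy (z * lam L t x) 1 with h | h | h
  · rw [hd0 t x h, min_eq_right h.le]
    ring
  -- On the tie `z Λ_t = 1` the two errors cost the same, so the value of `δ_t` is irrelevant.
  · rw [h, min_self]
    linear_combination (1 - d.δ t x) * p.phiFin t x * h
  · rw [hd1 t x h, min_eq_left h.le]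
    ring
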